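/- arXiv:2309.05585 — 2 statements merged into one kernel-verified Lean document; each statement's English description precedes it below -/
import Mathlib

section
/- Let Ω ⊆ ℝ³ open, ν ≥ 0, t₀ < t₁, and let u : (t₀,t₁) × Ω → ℝ³ and p : (t₀,t₁) × Ω → ℝ be smooth with div u = 0 and ∂ₜu + (u·∇)u − 2ν div D(u) + ∇p = 0 on (t₀,t₁) × Ω. Let φ : (t₀,t₁) × Ω → ℝ be C¹, satisfy the transport equation ∂ₜφ + u·∇φ = 0, and suppose there is a compact set K ⊂ Ω such that supp φ(t,·) ⊆ K for all t ∈ (t₀,t₁). Then for every t ∈ (t₀,t₁), the map t ↦ ∫_Ω φ (u × x) dx is differentiable with derivative ∫_Ω [ −2ν (D(u)∇φ) × x + p (∇φ × x) ] dx, where x denotes the position vector. -/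
/-!
Let `T = -u ⊗ u + 2ν D(u) - p I`, a symmetric tensor with columns `T_j` (`momentumFlux`). For
divergence-free `u` the Navier–Stokes equation reads `∂ₜu = div T` (`sum_fderiv_momentumFlux`).
The integrand `φ (u × x)` is `C¹` and vanishes off the compact set `K`, so one may differentiate
under the integral (`hasDerivAt_setIntegral_of_compact`), obtaining the integrand
`∂ₜφ (u × x) + φ (∂ₜu × x)`.

Consider the flux `W_j = φ (T_j × x)`. Since `T` is symmetric, `∑ j, T_j × e_j = 0`, hence
`∑ j, ∂_j W_j = (T ∇φ) × x + φ (div T × x)` (`sum_fderiv_smul_cross`). The transport equation gives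
`T ∇φ = ∂ₜφ u + 2ν D(u) ∇φ - p ∇φ`, so subtracting `∑ j, ∂_j W_j` from the time derivative leaves
exactly `-2ν (D(u) ∇φ) × x + p (∇φ × x)`. Finally each `W_j` is globally `C¹` with compact support
inside `Ω`, so its partial derivatives integrate to zero.
-/

open MeasureTheory Real Set Filter Matrix

noncomputable section

/-- The Jacobian matrix of a vector field on Euclidean space. -/
def jac {d : ℕ} (u : EuclideanSpace ℝ (Fin d) → EuclideanSpace ℝ (Fin d))
    (x : EuclideanSpace ℝ (Fin d)) : Matrix (Fin d) (Fin d) ℝ :=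
  fun i j => fderiv ℝ u x (EuclideanSpace.single j 1) i

/-- The rate-of-deformation (symmetric gradient) tensor. -/
def defT {d : ℕ} (u : EuclideanSpace ℝ (Fin d) → EuclideanSpace ℝ (Fin d))
    (x : EuclideanSpace ℝ (Fin d)) : Matrix (Fin d) (Fin d) ℝ :=
  (1/2 : ℝ) • (jac u x + (jac u x)ᵀ)

/-- The divergence of a vector field. -/
def dvg {d : ℕ} (u : EuclideanSpace ℝ (Fin d) → EuclideanSpace ℝ (Fin d))
    (x : EuclideanSpace ℝ (Fin d)) : ℝ :=
  Matrix.trace (jac u x)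

/-- The gradient of a scalar field, as a Euclidean vector. -/
def grd {d : ℕ} (φ : EuclideanSpace ℝ (Fin d) → ℝ)
    (x : EuclideanSpace ℝ (Fin d)) : EuclideanSpace ℝ (Fin d) :=
  (EuclideanSpace.equiv (Fin d) ℝ).symm (fun i => fderiv ℝ φ x (EuclideanSpace.single i 1))

/-- Matrix acting on a Euclidean vector. -/
def matVec {d : ℕ} (A : Matrix (Fin d) (Fin d) ℝ) (v : EuclideanSpace ℝ (Fin d)) :
    EuclideanSpace ℝ (Fin d) :=
  (EuclideanSpace.equiv (Fin d) ℝ).symm (A.mulVec (EuclideanSpace.equiv (Fin d) ℝ v))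

/-- Euclidean dot product. -/
def dotp {d : ℕ} (a b : EuclideanSpace ℝ (Fin d)) : ℝ := ∑ i, a i * b i

/-- Frobenius inner product of matrices. -/
def frob {d : ℕ} (A B : Matrix (Fin d) (Fin d) ℝ) : ℝ := ∑ i, ∑ j, A i j * B i j

/-- Cross product on Euclidean 3-space. -/
def cross (a b : EuclideanSpace ℝ (Fin 3)) : EuclideanSpace ℝ (Fin 3) :=
  (EuclideanSpace.equiv (Fin 3) ℝ).symm
    (crossProduct ((EuclideanSpace.equiv (Fin 3) ℝ) a) ((EuclideanSpace.equiv (Fin 3) ℝ) b))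

/-- divergence of the rate-of-deformation tensor: i-th component is ∑ⱼ ∂ⱼ D(u)ᵢⱼ. -/
def divD {d : ℕ} (u : EuclideanSpace ℝ (Fin d) → EuclideanSpace ℝ (Fin d))
    (x : EuclideanSpace ℝ (Fin d)) : EuclideanSpace ℝ (Fin d) :=
  (EuclideanSpace.equiv (Fin d) ℝ).symm
    (fun i => ∑ j, fderiv ℝ (fun y => defT u y i j) x (EuclideanSpace.single j 1))

open scoped Topology

local notation "E3" => EuclideanSpace ℝ (Fin 3)

/-! ### The cross product as a bilinear map -/

lemma cross_apply_zero (a b : E3) : cross a b 0 = a 1 * b 2 - a 2 * b 1 := by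
  simp [cross, cross_apply]

lemma cross_apply_one (a b : E3) : cross a b 1 = a 2 * b 0 - a 0 * b 2 := by
  simp [cross, cross_apply]

lemma cross_apply_two (a b : E3) : cross a b 2 = a 0 * b 1 - a 1 * b 0 := by
  simp [cross, cross_apply]

/-- The cross product as a continuous bilinear map, which gives its differentiation rules. -/
def crossL : E3 →L[ℝ] E3 →L[ℝ] E3 :=
  (LinearMap.mk₂ ℝ cross
    (fun a b c => by simp [cross]) (fun r a b => by simp [cross])
    (fun a b c => by simp [cross]) (fun r a b => by simp [cross])).toContinuousBilinearMap

lemma crossL_apply (a b : E3) : crossL a b = cross a b := rfl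

/-! ### Compactly supported fluxes -/

/-- A `C¹` field with compact support has no mean derivative in any direction. -/
lemma integral_fderiv_eq_zero_of_hasCompactSupport {w : E3 → E3} (hw : ContDiff ℝ 1 w)
    (hc : HasCompactSupport w) (v : E3) :
    Integrable (fun x => fderiv ℝ w x v) ∧ ∫ x, fderiv ℝ w x v = 0 := by
  have hi : Integrable (fun x => fderiv ℝ w x v) :=
    ((hw.continuous_fderiv one_ne_zero).clm_apply continuous_const).integrable_of_hasCompactSupport
      (hc.fderiv_apply ℝ v)
  refine ⟨hi, ?_⟩
  have := integral_smul_fderiv_eq_neg_fderiv_smul_of_integrable (μ := volume) (𝕜 := ℝ)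
    (f := fun _ : E3 => (1 : ℝ)) (g := w) (v := v) (by simp) (by simpa using hi)
    (by simpa using hw.continuous.integrable_of_hasCompactSupport hc)
    (by simp) (fun x _ => (hw.differentiable one_ne_zero) x)
  simpa using this

/-- Localizing by a cutoff supported inside `Ω` turns regularity on `Ω` into global regularity. -/
lemma contDiff_smul_of_tsupport_subset {Ω : Set E3} (hΩ : IsOpen Ω) {f : E3 → ℝ} {S : E3 → E3}
    (hf : ContDiffOn ℝ 1 f Ω) (hS : ContDiffOn ℝ 1 S Ω) (hs : tsupport f ⊆ Ω) :
    ContDiff ℝ 1 (fun x => f x • S x) := by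
  rw [contDiff_iff_contDiffAt]
  intro x
  by_cases hx : x ∈ Ω
  · exact (hf.smul hS).contDiffAt (hΩ.mem_nhds hx)
  · have h0 : f =ᶠ[𝓝 x] 0 := notMem_tsupport_iff_eventuallyEq.1 (fun h => hx (hs h))
    refine (contDiffAt_const (c := (0 : E3))).congr_of_eventuallyEq ?_
    filter_upwards [h0] with y hy
    simp [hy]

/-- The divergence of the weighted moment `f (T_j × x)` of a tensor with columns `T_j`: the term
`f ∑ j, T_j × e_j` produced by differentiating the position vector vanishes by symmetry of `T`. -/
lemma sum_fderiv_smul_cross {f : E3 → ℝ} {T : Fin 3 → E3 → E3} {x : E3}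
    (hf : DifferentiableAt ℝ f x) (hT : ∀ j, DifferentiableAt ℝ (T j) x)
    (hsymm : ∀ i j, T j x i = T i x j) :
    ∑ j, fderiv ℝ (fun y => f y • cross (T j y) y) x (EuclideanSpace.single j 1) =
      cross (∑ j, fderiv ℝ f x (EuclideanSpace.single j 1) • T j x) x
        + f x • cross (∑ j, fderiv ℝ (T j) x (EuclideanSpace.single j 1)) x := by
  have key : ∀ j, fderiv ℝ (fun y => f y • cross (T j y) y) x (EuclideanSpace.single j 1) =
      fderiv ℝ f x (EuclideanSpace.single j 1) • cross (T j x) x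
      + f x • (cross (fderiv ℝ (T j) x (EuclideanSpace.single j 1)) x
        + cross (T j x) (EuclideanSpace.single j 1)) := by
    intro j
    have h := hf.hasFDerivAt.smul
      (crossL.hasFDerivAt_of_bilinear (hT j).hasFDerivAt (hasFDerivAt_id x))
    have h' : fderiv ℝ (fun y => f y • cross (T j y) y) x = _ := h.fderiv
    rw [h']
    simp [crossL_apply]
    abel
  simp only [key]
  have h01 := hsymm 0 1
  have h02 := hsymm 0 2
  have h12 := hsymm 1 2
  ext i
  fin_cases i <;>
    simp [Fin.sum_univ_three, cross_apply_zero, cross_apply_one, cross_apply_two, h01, h02, h12] <;>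
    ring

/-! ### Differentiation under the integral -/

/-- Differentiation under the integral over `Ω` for a `C¹` integrand vanishing off a fixed
compact `K ⊆ Ω`; the derivative is dominated by its maximum over a compact time slab. -/
lemma hasDerivAt_setIntegral_of_compact {Ω K : Set E3} (hΩ : IsOpen Ω) (hK : IsCompact K)
    (hKΩ : K ⊆ Ω) {t₀ t₁ : ℝ} {F : ℝ → E3 → E3}
    (hF : ContDiffOn ℝ 1 (Function.uncurry F) (Ioo t₀ t₁ ×ˢ Ω))
    (h0 : ∀ s ∈ Ioo t₀ t₁, ∀ x ∉ K, F s x = 0) {t : ℝ} (ht : t ∈ Ioo t₀ t₁) :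
    IntegrableOn (fun x => deriv (fun s => F s x) t) Ω ∧
      HasDerivAt (fun s => ∫ x in Ω, F s x) (∫ x in Ω, deriv (fun s => F s x) t) t := by
  have hop : IsOpen (Ioo t₀ t₁ ×ˢ Ω) := isOpen_Ioo.prod hΩ
  have hder : ∀ s ∈ Ioo t₀ t₁, ∀ x ∈ Ω,
      HasDerivAt (fun r => F r x) (fderiv ℝ (Function.uncurry F) (s, x) (1, 0)) s := by
    intro s hs x hx
    have h1 : HasFDerivAt (Function.uncurry F) (fderiv ℝ (Function.uncurry F) (s, x)) (s, x) :=
      ((hF.contDiffAt (hop.mem_nhds ⟨hs, hx⟩)).differentiableAt one_ne_zero).hasFDerivAt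
    exact h1.comp_hasDerivAt (f := fun r => (r, x)) s
      ((hasDerivAt_id s).prodMk (hasDerivAt_const s x))
  have hcont : ContinuousOn (fun q : ℝ × E3 => deriv (fun s => F s q.2) q.1)
      (Ioo t₀ t₁ ×ˢ Ω) := by
    refine ((hF.continuousOn_fderiv_of_isOpen hop le_rfl).clm_apply
      (continuousOn_const (c := ((1 : ℝ), (0 : E3))))).congr ?_
    rintro ⟨s, x⟩ ⟨hs, hx⟩
    exact (hder s hs x hx).deriv
  have hzero : ∀ s ∈ Ioo t₀ t₁, ∀ x ∉ K, deriv (fun r => F r x) s = 0 := by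
    intro s hs x hx
    have : (fun r => F r x) =ᶠ[𝓝 s] fun _ => 0 := by
      filter_upwards [isOpen_Ioo.mem_nhds hs] with r hr using h0 r hr x hx
    rw [this.deriv_eq, deriv_const]
  have hslice : ∀ s ∈ Ioo t₀ t₁, MapsTo (fun x : E3 => (s, x)) Ω (Ioo t₀ t₁ ×ˢ Ω) :=
    fun s hs x hx => ⟨hs, hx⟩
  have hFs : ∀ s ∈ Ioo t₀ t₁, ContinuousOn (F s) Ω := fun s hs =>
    hF.continuousOn.comp (f := fun x : E3 => (s, x)) (by fun_prop) (hslice s hs)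
  have hF's : ContinuousOn (fun x => deriv (fun r => F r x) t) Ω :=
    hcont.comp (f := fun x : E3 => (t, x)) (by fun_prop) (hslice t ht)
  obtain ⟨a, b, htab, habn, hab⟩ : ∃ a b, t ∈ Icc a b ∧ Icc a b ∈ 𝓝 t ∧ Icc a b ⊆ Ioo t₀ t₁ :=
    exists_Icc_mem_subset_of_mem_nhds (isOpen_Ioo.mem_nhds ht)
  obtain ⟨C, hC⟩ := (isCompact_Icc.prod hK).exists_bound_of_continuousOn
    (hcont.mono (prod_mono hab hKΩ))
  have hFint : IntegrableOn (F t) Ω := by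
    refine (((hFs t ht).mono hKΩ).integrableOn_compact hK).of_forall_sdiff_eq_zero
      hΩ.measurableSet ?_
    exact fun x hx => h0 t ht x hx.2
  refine hasDerivAt_integral_of_dominated_loc_of_deriv_le (μ := volume.restrict Ω)
    (F' := fun s x => deriv (fun r => F r x) s)
    (bound := K.indicator fun _ => C) habn ?_ hFint
    (hF's.aestronglyMeasurable hΩ.measurableSet) ?_ ?_ ?_
  · filter_upwards [isOpen_Ioo.mem_nhds ht] with s hs
    exact (hFs s hs).aestronglyMeasurable hΩ.measurableSet
  · refine ae_of_all _ fun x s hs => ?_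
    by_cases hx : x ∈ K
    · simpa [hx] using hC (s, x) ⟨hs, hx⟩
    · simp [hx, hzero s (hab hs) x hx]
  · have : IntegrableOn (fun _ : E3 => C) K := integrableOn_const hK.measure_ne_top
    exact (this.integrable_indicator hK.measurableSet).integrableOn
  · filter_upwards [ae_restrict_mem hΩ.measurableSet] with x hx s hs
    have := hder s (hab hs) x hx
    rwa [← this.deriv] at this

/-! ### The momentum flux tensor -/

lemma fderiv_apply_coord {w : E3 → E3} {x : E3} (hw : DifferentiableAt ℝ w x) (v : E3)
    (i : Fin 3) : fderiv ℝ w x v i = fderiv ℝ (fun y => w y i) x v := by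
  have h : HasFDerivAt (fun y => w y i) (EuclideanSpace.proj i ∘L fderiv ℝ w x) x :=
    (EuclideanSpace.proj (𝕜 := ℝ) i).hasFDerivAt.comp x hw.hasFDerivAt
  rw [h.fderiv]
  rfl

/-- The `j`-th column of `-u ⊗ u + 2ν D(u) - p I`, the negative of the momentum flux, whose
divergence is `∂ₜu` along solutions. -/
def momentumFlux (ν : ℝ) (u : E3 → E3) (p : E3 → ℝ) (j : Fin 3) (y : E3) : E3 :=
  WithLp.toLp 2 fun i =>
    -(u y i * u y j) + 2 * ν * defT u y i j - p y * (if i = j then 1 else 0)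

lemma momentumFlux_symm (ν : ℝ) (u : E3 → E3) (p : E3 → ℝ) (y : E3) (i j : Fin 3) :
    momentumFlux ν u p j y i = momentumFlux ν u p i y j := by
  simp only [momentumFlux, defT, Matrix.smul_apply, Matrix.add_apply, Matrix.transpose_apply,
    smul_eq_mul, @eq_comm _ i j]
  ring

lemma contDiffOn_defT {Ω : Set E3} (hΩ : IsOpen Ω) {u : E3 → E3}
    (hu : ContDiffOn ℝ (⊤ : ℕ∞) u Ω) (i j : Fin 3) :
    ContDiffOn ℝ 1 (fun y => defT u y i j) Ω := by
  have hjac : ∀ i j, ContDiffOn ℝ 1 (fun y => jac u y i j) Ω := by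
    intro i j
    have h1 : ContDiffOn ℝ 1 (fderiv ℝ u) Ω :=
      hu.fderiv_of_isOpen hΩ (by norm_cast)
    exact contDiffOn_euclidean.1
      (h1.clm_apply (contDiffOn_const (c := (EuclideanSpace.single j 1 : E3)))) i
  simp only [defT, Matrix.smul_apply, Matrix.add_apply, Matrix.transpose_apply, smul_eq_mul]
  exact contDiffOn_const.mul ((hjac i j).add (hjac j i))

lemma contDiffOn_momentumFlux {Ω : Set E3} (hΩ : IsOpen Ω) (ν : ℝ) {u : E3 → E3} {p : E3 → ℝ}
    (hu : ContDiffOn ℝ (⊤ : ℕ∞) u Ω) (hp : ContDiffOn ℝ (⊤ : ℕ∞) p Ω) (j : Fin 3) :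
    ContDiffOn ℝ 1 (momentumFlux ν u p j) Ω := by
  rw [contDiffOn_euclidean]
  intro i
  have hu1 : ∀ k, ContDiffOn ℝ 1 (fun y => u y k) Ω :=
    contDiffOn_euclidean.1 (hu.of_le (by exact_mod_cast le_top))
  have hp1 : ContDiffOn ℝ 1 p Ω := hp.of_le (by exact_mod_cast le_top)
  exact (((hu1 i).mul (hu1 j)).neg.add (contDiffOn_const.mul (contDiffOn_defT hΩ hu i j))).sub
    (hp1.mul contDiffOn_const)

/-- The divergence of `-u ⊗ u + 2ν D(u) - p I`; incompressibility kills the term `-(div u) u`. -/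
lemma sum_fderiv_momentumFlux {Ω : Set E3} (hΩ : IsOpen Ω) (ν : ℝ) {u : E3 → E3} {p : E3 → ℝ}
    (hu : ContDiffOn ℝ (⊤ : ℕ∞) u Ω) (hp : ContDiffOn ℝ (⊤ : ℕ∞) p Ω) {x : E3} (hx : x ∈ Ω)
    (hdiv : dvg u x = 0) :
    ∑ j, fderiv ℝ (momentumFlux ν u p j) x (EuclideanSpace.single j 1) =
      -(fderiv ℝ u x (u x)) + (2 * ν) • divD u x - grd p x := by
  have hn := hΩ.mem_nhds hx
  have hud : DifferentiableAt ℝ u x := (hu.contDiffAt hn).differentiableAt (by simp)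
  have huk : ∀ k, DifferentiableAt ℝ (fun y => u y k) x := differentiableAt_euclidean.1 hud
  have hpd : DifferentiableAt ℝ p x := (hp.contDiffAt hn).differentiableAt (by simp)
  have hDd : ∀ i j, DifferentiableAt ℝ (fun y => defT u y i j) x := fun i j =>
    ((contDiffOn_defT hΩ hu i j).contDiffAt hn).differentiableAt one_ne_zero
  have hTd : ∀ j, DifferentiableAt ℝ (momentumFlux ν u p j) x := fun j =>
    ((contDiffOn_momentumFlux hΩ ν hu hp j).contDiffAt hn).differentiableAt one_ne_zero
  have hcol : ∀ i j, fderiv ℝ (momentumFlux ν u p j) x (EuclideanSpace.single j 1) i =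
      -(u x i * jac u x j j + u x j * jac u x i j)
        + 2 * ν * fderiv ℝ (fun y => defT u y i j) x (EuclideanSpace.single j 1)
        - (if i = j then 1 else 0) * fderiv ℝ p x (EuclideanSpace.single j 1) := by
    intro i j
    rw [fderiv_apply_coord (hTd j)]
    have h := ((((huk i).hasFDerivAt.mul (huk j).hasFDerivAt).neg.add
      ((hDd i j).hasFDerivAt.const_mul (2 * ν))).sub
      (hpd.hasFDerivAt.mul_const (if i = j then (1 : ℝ) else 0)))
    have h' : fderiv ℝ (fun y => momentumFlux ν u p j y i) x = _ := h.fderiv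
    rw [h']
    simp only [jac, fderiv_apply_coord hud]
    split_ifs <;> simp
  have hconv : ∀ i, fderiv ℝ u x (u x) i = ∑ j, u x j * jac u x i j := by
    intro i
    have hsum : u x = ∑ j, u x j • (EuclideanSpace.single j 1 : E3) := by
      ext k
      simp [Fin.sum_univ_three]
      fin_cases k <;> simp
    conv_lhs => rw [hsum]
    simp [jac]
  have hdiv' : jac u x 0 0 + jac u x 1 1 + jac u x 2 2 = 0 := by
    simpa [dvg, Matrix.trace, Fin.sum_univ_three] using hdiv
  ext i
  have hs : (∑ j, fderiv ℝ (momentumFlux ν u p j) x (EuclideanSpace.single j 1)) i =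
      ∑ j, fderiv ℝ (momentumFlux ν u p j) x (EuclideanSpace.single j 1) i := by
    simp
  rw [hs]
  simp only [hcol]
  simp only [PiLp.sub_apply, PiLp.add_apply, PiLp.neg_apply, PiLp.smul_apply, hconv, smul_eq_mul]
  simp only [divD, grd, Fin.sum_univ_three]
  fin_cases i <;> simp
  · linear_combination (-(u x 0)) * hdiv'
  · linear_combination (-(u x 1)) * hdiv'
  · linear_combination (-(u x 2)) * hdiv'

lemma sum_smul_momentumFlux (ν : ℝ) (u : E3 → E3) (p f : E3 → ℝ) (x : E3) :
    ∑ j, fderiv ℝ f x (EuclideanSpace.single j 1) • momentumFlux ν u p j x =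
      -(dotp (u x) (grd f x)) • u x + (2 * ν) • matVec (defT u x) (grd f x) - p x • grd f x := by
  ext i
  fin_cases i <;>
    simp [momentumFlux, dotp, grd, matVec, Matrix.mulVec, dotProduct, Fin.sum_univ_three] <;> ring

/-! ### Balance of angular momentum -/

/-- Weak (diffuse-volume) Lagrangian local angular momentum balance in `ℝ³`:
under the same hypotheses as the momentum case, for each `t ∈ (t₀,t₁)` the map
`t ↦ ∫_Ω φ (u × x) dx` is differentiable with derivative
`∫_Ω [−2ν (D(u)∇φ) × x + p (∇φ × x)] dx`. -/
theorem weak_lagrangian_angular_momentum_balance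
    (Ω : Set (EuclideanSpace ℝ (Fin 3))) (hΩ : IsOpen Ω) (ν : ℝ) (hν : 0 ≤ ν)
    (t₀ t₁ : ℝ) (ht : t₀ < t₁)
    (u : ℝ → EuclideanSpace ℝ (Fin 3) → EuclideanSpace ℝ (Fin 3))
    (p : ℝ → EuclideanSpace ℝ (Fin 3) → ℝ)
    (φ : ℝ → EuclideanSpace ℝ (Fin 3) → ℝ)
    (hu : ContDiffOn ℝ (⊤ : ℕ∞) (Function.uncurry u) (Set.Ioo t₀ t₁ ×ˢ Ω))
    (hp : ContDiffOn ℝ (⊤ : ℕ∞) (Function.uncurry p) (Set.Ioo t₀ t₁ ×ˢ Ω))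
    (hdiv : ∀ t ∈ Set.Ioo t₀ t₁, ∀ x ∈ Ω, dvg (u t) x = 0)
    (hnse : ∀ t ∈ Set.Ioo t₀ t₁, ∀ x ∈ Ω,
      deriv (fun s => u s x) t + fderiv ℝ (u t) x (u t x)
        - (2 * ν) • divD (u t) x + grd (p t) x = 0)
    (hφ : ContDiffOn ℝ 1 (Function.uncurry φ) (Set.Ioo t₀ t₁ ×ˢ Ω))
    (htrans : ∀ t ∈ Set.Ioo t₀ t₁, ∀ x ∈ Ω,
      deriv (fun s => φ s x) t + dotp (u t x) (grd (φ t) x) = 0)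
    (K : Set (EuclideanSpace ℝ (Fin 3))) (hK : IsCompact K) (hKΩ : K ⊆ Ω)
    (hsupp : ∀ t ∈ Set.Ioo t₀ t₁, tsupport (φ t) ⊆ K) :
    ∀ t ∈ Set.Ioo t₀ t₁,
      HasDerivAt (fun s => ∫ x in Ω, φ s x • cross (u s x) x)
        (∫ x in Ω, ((-(2 * ν)) • cross (matVec (defT (u t) x) (grd (φ t) x)) x
          + p t x • cross (grd (φ t) x) x)) t := by
  intro t ht'
  have hop : IsOpen (Ioo t₀ t₁ ×ˢ Ω) := isOpen_Ioo.prod hΩ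
  have hslice : MapsTo (fun x : EuclideanSpace ℝ (Fin 3) => (t, x)) Ω (Ioo t₀ t₁ ×ˢ Ω) :=
    fun x hx => ⟨ht', hx⟩
  have hut : ContDiffOn ℝ (⊤ : ℕ∞) (u t) Ω :=
    hu.comp (f := fun x : EuclideanSpace ℝ (Fin 3) => (t, x)) (by fun_prop) hslice
  have hpt : ContDiffOn ℝ (⊤ : ℕ∞) (p t) Ω :=
    hp.comp (f := fun x : EuclideanSpace ℝ (Fin 3) => (t, x)) (by fun_prop) hslice
  have hφt : ContDiffOn ℝ 1 (φ t) Ω :=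
    hφ.comp (f := fun x : EuclideanSpace ℝ (Fin 3) => (t, x)) (by fun_prop) hslice
  have hu1 : ContDiffOn ℝ 1 (Function.uncurry u) (Ioo t₀ t₁ ×ˢ Ω) :=
    hu.of_le (by exact_mod_cast le_top)
  have hF : ContDiffOn ℝ 1 (Function.uncurry fun s x => φ s x • cross (u s x) x)
      (Ioo t₀ t₁ ×ˢ Ω) :=
    hφ.smul (crossL.isBoundedBilinearMap.contDiff.comp_contDiffOn (hu1.prodMk contDiffOn_snd))
  obtain ⟨hF'int, hF'⟩ := hasDerivAt_setIntegral_of_compact hΩ hK hKΩ hF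
    (fun s hs x hx => by simp [image_eq_zero_of_notMem_tsupport fun h => hx (hsupp s hs h)]) ht'
  set W : Fin 3 → EuclideanSpace ℝ (Fin 3) → EuclideanSpace ℝ (Fin 3) :=
    fun j y => φ t y • cross (momentumFlux ν (u t) (p t) j y) y with hWdef
  have hW : ∀ j, ContDiff ℝ 1 (W j) := fun j =>
    contDiff_smul_of_tsupport_subset hΩ hφt
      (crossL.isBoundedBilinearMap.contDiff.comp_contDiffOn
        ((contDiffOn_momentumFlux hΩ ν hut hpt j).prodMk contDiffOn_id))
      ((hsupp t ht').trans hKΩ)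
  have hWK : ∀ j, tsupport (W j) ⊆ K := fun j =>
    (tsupport_smul_subset_left _ _).trans (hsupp t ht')
  have hWc : ∀ j, HasCompactSupport (W j) := fun j =>
    hK.of_isClosed_subset (isClosed_tsupport _) (hWK j)
  have hWint := fun j => integral_fderiv_eq_zero_of_hasCompactSupport (hW j) (hWc j)
    (EuclideanSpace.single j 1)
  have hWΩ : ∀ j, ∫ x in Ω, fderiv ℝ (W j) x (EuclideanSpace.single j 1) = 0 := by
    intro j
    rw [setIntegral_eq_integral_of_forall_compl_eq_zero, (hWint j).2]
    intro x hx
    rw [image_eq_zero_of_notMem_tsupport (f := fderiv ℝ (W j))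
      fun h => hx (hKΩ (hWK j (tsupport_fderiv_subset ℝ h)))]
    rfl
  -- Pointwise, the two integrands differ by the divergence of the compactly supported flux `W`.
  have hpoint : ∀ x ∈ Ω,
      (-(2 * ν)) • cross (matVec (defT (u t) x) (grd (φ t) x)) x + p t x • cross (grd (φ t) x) x =
      deriv (fun s => φ s x • cross (u s x) x) t
        - ∑ j, fderiv ℝ (W j) x (EuclideanSpace.single j 1) := by
    intro x hx
    have hn := hΩ.mem_nhds hx
    have hline : DifferentiableAt ℝ (fun s : ℝ => (s, x)) t := by fun_prop
    have hφs : DifferentiableAt ℝ (fun s => φ s x) t :=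
      ((hφ.contDiffAt (hop.mem_nhds ⟨ht', hx⟩)).differentiableAt one_ne_zero).comp
        (f := fun s : ℝ => (s, x)) t hline
    have hus : DifferentiableAt ℝ (fun s => u s x) t :=
      ((hu1.contDiffAt (hop.mem_nhds ⟨ht', hx⟩)).differentiableAt one_ne_zero).comp
        (f := fun s : ℝ => (s, x)) t hline
    have hd : deriv (fun s => φ s x • cross (u s x) x) t =
        φ t x • cross (deriv (fun s => u s x) t) x + deriv (fun s => φ s x) t • cross (u t x) x :=
      (hφs.hasDerivAt.smul
        (((crossL.flip x).hasFDerivAt (x := u t x)).comp_hasDerivAt t hus.hasDerivAt)).deriv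
    have hut' : deriv (fun s => u s x) t =
        -(fderiv ℝ (u t) x (u t x)) + (2 * ν) • divD (u t) x - grd (p t) x := by
      rw [← sub_eq_zero, ← hnse t ht' x hx]
      abel
    have hφt' : -(dotp (u t x) (grd (φ t) x)) = deriv (fun s => φ s x) t := by
      linarith [htrans t ht' x hx]
    rw [hd, sum_fderiv_smul_cross ((hφt.contDiffAt hn).differentiableAt one_ne_zero)
      (fun j => ((contDiffOn_momentumFlux hΩ ν hut hpt j).contDiffAt hn).differentiableAt
        one_ne_zero) (momentumFlux_symm ν (u t) (p t) x),
      sum_fderiv_momentumFlux hΩ ν hut hpt hx (hdiv t ht' x hx), sum_smul_momentumFlux,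
      ← hut', hφt']
    simp only [← crossL_apply, map_add, map_sub, map_smul, _root_.add_apply,
      _root_.sub_apply, _root_.smul_apply]
    module
  rw [setIntegral_congr_fun hΩ.measurableSet hpoint,
    integral_sub hF'int (integrable_finsetSum _ fun j _ => (hWint j).1.integrableOn),
    integral_finsetSum _ fun j _ => (hWint j).1.integrableOn]
  simpa [hWΩ] using hF'

end
end

section
/- Let d ≥ 1, ν ≥ 0. Let u : ℝ × ℝ^d → ℝ^d be C¹, p̂ : ℝ × ℝ^d → ℝ continuous, and φ : ℝ × ℝ^d → ℝ be C¹ with supp φ(t,·) contained in a fixed compact set K for all t. Assume that at every time t and for every constant vector c ∈ ℝ^d: (i) the EMAC variational identity ∫_{ℝ^d} [ ∂ₜu·v + 2(D(u)u)·v + (div u)(u·v) + 2ν ⟨D(u), D(v)⟩_F − p̂ (div v) ] dx = 0 holds with the test field v(x) = φ(t,x) c, and (ii) the weak transport identity ∫_{ℝ^d} (∂ₜφ + u·∇φ)(u·c) dx = 0 holds. Then, setting p = p̂ + ½‖u‖², for every t the map t ↦ ∫_{ℝ^d} φ(t,·) u(t,·) dx is differentiable with derivative ∫_{ℝ^d}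 [ −2ν D(u)∇φ + p ∇φ ] dx. -/
/-!
Fix a time `t` and a basis vector `eₖ`. Since `D(u)` is symmetric and `2 D(u)u` equals `(u·∇)u`
plus `½∇‖u‖²`, the product rule shows that the EMAC integrand tested with `φ eₖ`, plus the
transport integrand tested with `eₖ`, plus the `k`-th component of `-2ν D(u)∇φ + p∇φ`, equals
the `k`-th component of `∂ₜ(φ u)` plus the exact divergence
`∑ⱼ ∂ⱼ(φ uⱼ uₖ) + ½ ∂ₖ(φ ‖u‖²)` (`pointwise_balance`).
All these terms are continuous with compact support in `x`, the partial derivatives of compactly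
supported `C¹` functions integrate to zero (`integral_fderiv_eq_zero`), and the first two
integrals vanish by hypothesis. Hence `∫ ∂ₜ(φ u)` is the claimed right-hand side, and it is the
derivative of `∫ φ u` by dominated differentiation (`hasDerivAt_integral_of_compact`), the
integrand being jointly `C¹` and supported in the fixed compact set `K`.
-/

open MeasureTheory Real Set Filter Matrix

noncomputable section

section Helpers

variable {d : ℕ}

local notation "𝔼" => EuclideanSpace ℝ (Fin d)

lemma dotp_smul_single (v : 𝔼) (r : ℝ) (k : Fin d) :
    dotp v (r • EuclideanSpace.single k 1) = r * v k := by
  simp [dotp, mul_comm]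

lemma dotp_single (v : 𝔼) (k : Fin d) :
    dotp v (EuclideanSpace.single k 1) = v k := by
  simp [dotp]

lemma matVec_apply (A : Matrix (Fin d) (Fin d) ℝ) (v : 𝔼) (i : Fin d) :
    matVec A v i = ∑ j, A i j * v j := rfl

lemma grd_apply (f : 𝔼 → ℝ) (x : 𝔼) (i : Fin d) :
    grd f x i = fderiv ℝ f x (EuclideanSpace.single i 1) := rfl

lemma defT_apply (w : 𝔼 → 𝔼) (x : 𝔼) (i j : Fin d) :
    defT w x i j = 1 / 2 * (jac w x i j + jac w x j i) := rfl

lemma defT_symm (w : 𝔼 → 𝔼) (x : 𝔼) (i j : Fin d) : defT w x i j = defT w x j i := by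
  simp only [defT_apply, add_comm]

lemma jac_smul_const {f : 𝔼 → ℝ} {x : 𝔼} (hf : DifferentiableAt ℝ f x) (c : 𝔼) (i j : Fin d) :
    jac (fun y => f y • c) x i j = grd f x j * c i := by
  simp [jac, grd_apply, fderiv_smul_const hf c]

lemma dvg_smul_single {f : 𝔼 → ℝ} {x : 𝔼} (hf : DifferentiableAt ℝ f x) (k : Fin d) :
    dvg (fun y => f y • EuclideanSpace.single k (1 : ℝ)) x = grd f x k := by
  simp [dvg, Matrix.trace, jac_smul_const hf]

/-- Since `D(w)` is symmetric, `⟨D(w), D(f eₖ)⟩_F` equals the `k`-th component of `D(w)∇f`. -/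
lemma frob_defT_smul_single (w : 𝔼 → 𝔼) {f : 𝔼 → ℝ} {x : 𝔼} (hf : DifferentiableAt ℝ f x)
    (k : Fin d) :
    frob (defT w x) (defT (fun y => f y • EuclideanSpace.single k (1 : ℝ)) x)
      = matVec (defT w x) (grd f x) k := by
  have h1 : ∑ i, ∑ j, defT w x i j * (grd f x j * (EuclideanSpace.single k (1 : ℝ) : 𝔼) i)
      = ∑ j, defT w x k j * grd f x j := by
    rw [Finset.sum_comm]
    simp
  have h2 : ∑ i, ∑ j, defT w x i j * (grd f x i * (EuclideanSpace.single k (1 : ℝ) : 𝔼) j)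
      = ∑ j, defT w x k j * grd f x j := by
    simp [defT_symm w x _ k]
  rw [matVec_apply, frob]
  calc _ = 1 / 2 * (∑ i, ∑ j, defT w x i j * (grd f x j * (EuclideanSpace.single k (1 : ℝ) : 𝔼) i)
        + ∑ i, ∑ j, defT w x i j * (grd f x i * (EuclideanSpace.single k (1 : ℝ) : 𝔼) j)) := by
        simp only [← Finset.sum_add_distrib, Finset.mul_sum]
        refine Finset.sum_congr rfl fun i _ => Finset.sum_congr rfl fun j _ => ?_
        rw [defT_apply (fun y => f y • EuclideanSpace.single k (1 : ℝ)), jac_smul_const hf,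
          jac_smul_const hf]
        ring
    _ = _ := by rw [h1, h2]; ring

lemma hasFDerivAt_coord {w : 𝔼 → 𝔼} {x : 𝔼} (hw : DifferentiableAt ℝ w x) (i : Fin d) :
    HasFDerivAt (fun y => w y i) ((EuclideanSpace.proj i : 𝔼 →L[ℝ] ℝ) ∘L fderiv ℝ w x) x :=
  (EuclideanSpace.proj i : 𝔼 →L[ℝ] ℝ).hasFDerivAt.comp x hw.hasFDerivAt

/-- Product rule: the `j`-th partial derivative of `f wⱼ wₖ`. -/
lemma fderiv_flux {f : 𝔼 → ℝ} {w : 𝔼 → 𝔼} {x : 𝔼} (hf : DifferentiableAt ℝ f x)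
    (hw : DifferentiableAt ℝ w x) (j k : Fin d) :
    fderiv ℝ (fun y => f y * (w y j * w y k)) x (EuclideanSpace.single j 1)
      = grd f x j * w x j * w x k + f x * jac w x j j * w x k + f x * w x j * jac w x k j := by
  have h : HasFDerivAt (fun y => f y * (w y j * w y k)) _ x :=
    hf.hasFDerivAt.mul ((hasFDerivAt_coord hw j).mul (hasFDerivAt_coord hw k))
  rw [h.fderiv]
  simp [grd_apply, jac]
  ring

/-- Product rule: the `k`-th partial derivative of `f |w|²`. -/
lemma fderiv_energy {f : 𝔼 → ℝ} {w : 𝔼 → 𝔼} {x : 𝔼} (hf : DifferentiableAt ℝ f x)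
    (hw : DifferentiableAt ℝ w x) (k : Fin d) :
    fderiv ℝ (fun y => f y * ∑ i, w y i * w y i) x (EuclideanSpace.single k 1)
      = grd f x k * (∑ i, w x i * w x i) + 2 * f x * ∑ i, w x i * jac w x i k := by
  have h : HasFDerivAt (fun y => f y * ∑ i, w y i * w y i) _ x :=
    hf.hasFDerivAt.mul (HasFDerivAt.fun_sum (u := Finset.univ) fun i _ =>
      (hasFDerivAt_coord hw i).mul (hasFDerivAt_coord hw i))
  rw [h.fderiv]
  simp [grd_apply, jac, Finset.mul_sum]
  rw [add_comm, mul_comm]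
  simp only [Finset.mul_sum]
  congr 1
  exact Finset.sum_congr rfl fun i _ => by ring

/-- Pointwise form of the balance law: the EMAC integrand tested with `f eₖ`, the transport
integrand tested with `eₖ`, and the `k`-th component of the stress integrand add up to the
`k`-th component of `∂ₜ(f w)` plus exact divergences. Here `w'` and `f'` stand for the time
derivatives of `w` and `f`. -/
lemma pointwise_balance {f : 𝔼 → ℝ} {w : 𝔼 → 𝔼} {x : 𝔼} (hf : DifferentiableAt ℝ f x)
    (hw : DifferentiableAt ℝ w x) (w' : 𝔼) (f' q ν : ℝ) (k : Fin d) :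
    (dotp w' (f x • EuclideanSpace.single k 1)
        + 2 * dotp (matVec (defT w x) (w x)) (f x • EuclideanSpace.single k 1)
        + dvg w x * dotp (w x) (f x • EuclideanSpace.single k 1)
        + 2 * ν * frob (defT w x) (defT (fun y => f y • EuclideanSpace.single k (1 : ℝ)) x)
        - q * dvg (fun y => f y • EuclideanSpace.single k (1 : ℝ)) x)
      + (f' + dotp (w x) (grd f x)) * dotp (w x) (EuclideanSpace.single k 1)
      + ((-(2 * ν)) • matVec (defT w x) (grd f x) + (q + (1/2) * ‖w x‖ ^ 2) • grd f x) k
      = (f x • w' + f' • w x) k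
        + ((∑ j, fderiv ℝ (fun y => f y * (w y j * w y k)) x (EuclideanSpace.single j 1))
          + 1 / 2 * fderiv ℝ (fun y => f y * ∑ i, w y i * w y i) x
            (EuclideanSpace.single k 1)) := by
  have hn : ‖w x‖ ^ 2 = ∑ i, w x i * w x i := by
    rw [EuclideanSpace.real_norm_sq_eq]
    simp only [sq]
  have hD : 2 * matVec (defT w x) (w x) k
      = (∑ j, w x j * jac w x k j) + ∑ j, w x j * jac w x j k := by
    rw [matVec_apply, Finset.mul_sum, ← Finset.sum_add_distrib]
    refine Finset.sum_congr rfl fun j _ => ?_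
    rw [defT_apply]
    ring
  have hflux : ∑ j, fderiv ℝ (fun y => f y * (w y j * w y k)) x (EuclideanSpace.single j 1)
      = dotp (w x) (grd f x) * w x k + f x * dvg w x * w x k
        + f x * ∑ j, w x j * jac w x k j := by
    simp only [fderiv_flux hf hw, Finset.sum_add_distrib, dotp, dvg, Matrix.trace,
      Matrix.diag_apply, Finset.sum_mul, Finset.mul_sum]
    congr 1
    · congr 1
      exact Finset.sum_congr rfl fun j _ => by ring
    · exact Finset.sum_congr rfl fun j _ => by ring
  rw [dotp_smul_single, dotp_smul_single, dotp_smul_single, dotp_single,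
    frob_defT_smul_single w hf, dvg_smul_single hf, hflux, fderiv_energy hf hw, hn]
  simp only [PiLp.add_apply, PiLp.smul_apply, smul_eq_mul]
  linear_combination f x * hD

lemma integral_fderiv_eq_zero {g : 𝔼 → ℝ} (hg : ContDiff ℝ 1 g) (hc : HasCompactSupport g)
    (v : 𝔼) : Integrable (fun x => fderiv ℝ g x v) ∧ ∫ x, fderiv ℝ g x v = 0 := by
  have hi : Integrable (fun x => fderiv ℝ g x v) :=
    ((hg.continuous_fderiv one_ne_zero).clm_apply continuous_const).integrable_of_hasCompactSupport
      (hc.fderiv_apply ℝ v)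
  refine ⟨hi, ?_⟩
  simpa using integral_mul_fderiv_eq_neg_fderiv_mul_of_integrable (μ := volume)
    (f := fun _ : 𝔼 => (1 : ℝ)) (g := g) (v := v) (by simp) (by simpa using hi)
    (by simpa using hg.continuous.integrable_of_hasCompactSupport hc)
    (fun x _ => differentiableAt_const _) (fun x _ => hg.differentiable one_ne_zero x)

/-- The time derivative at a fixed point of a jointly `C¹` field. -/
lemma hasDerivAt_slice {F : Type*} [NormedAddCommGroup F] [NormedSpace ℝ F] {f : ℝ → 𝔼 → F}
    (hf : ContDiff ℝ 1 (Function.uncurry f)) (t : ℝ) (x : 𝔼) :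
    HasDerivAt (fun s => f s x) (fderiv ℝ (Function.uncurry f) (t, x) (1, 0)) t :=
  (hf.differentiable one_ne_zero (t, x)).hasFDerivAt.comp_hasDerivAt (f := fun s => (s, x)) t
    ((hasDerivAt_id t).prodMk (hasDerivAt_const t x))

lemma continuous_deriv_slice {F : Type*} [NormedAddCommGroup F] [NormedSpace ℝ F]
    {f : ℝ → 𝔼 → F} (hf : ContDiff ℝ 1 (Function.uncurry f)) :
    Continuous fun p : ℝ × 𝔼 => deriv (fun s => f s p.2) p.1 := by
  have : (fun p : ℝ × 𝔼 => deriv (fun s => f s p.2) p.1)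
      = fun p => fderiv ℝ (Function.uncurry f) p (1, 0) :=
    funext fun p => (hasDerivAt_slice hf p.1 p.2).deriv
  rw [this]
  exact (hf.continuous_fderiv one_ne_zero).clm_apply continuous_const

/-- Differentiation under the integral sign for a jointly `C¹` integrand whose time slices
vanish outside a fixed compact set. -/
lemma hasDerivAt_integral_of_compact {F : Type*} [NormedAddCommGroup F] [NormedSpace ℝ F]
    {f : ℝ → 𝔼 → F} (hf : ContDiff ℝ 1 (Function.uncurry f)) {K : Set 𝔼}
    (hK : IsCompact K) (h0 : ∀ t x, x ∉ K → f t x = 0) (t : ℝ) :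
    Integrable (fun x => deriv (fun s => f s x) t) ∧
      HasDerivAt (fun s => ∫ x, f s x) (∫ x, deriv (fun s => f s x) t) t := by
  have hc : ∀ s, Continuous (f s) := fun s =>
    hf.continuous.comp (continuous_const.prodMk continuous_id)
  have hd := continuous_deriv_slice hf
  obtain ⟨C, hC⟩ := ((isCompact_Icc (a := t - 1) (b := t + 1)).prod hK).exists_bound_of_continuousOn
    hd.continuousOn
  refine hasDerivAt_integral_of_dominated_loc_of_deriv_le (s := Icc (t - 1) (t + 1))
    (F' := fun s x => deriv (fun s => f s x) s) (bound := K.indicator fun _ => C)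
    (Icc_mem_nhds (by linarith) (by linarith))
    (Eventually.of_forall fun s => (hc s).aestronglyMeasurable)
    ((hc t).integrable_of_hasCompactSupport (HasCompactSupport.intro hK fun x hx => h0 t x hx))
    (hd.comp (continuous_const.prodMk continuous_id)).aestronglyMeasurable
    (Eventually.of_forall fun x s hs => ?_) ?_
    (Eventually.of_forall fun x s _ => (hasDerivAt_slice hf s x).differentiableAt.hasDerivAt)
  · by_cases hx : x ∈ K
    · simpa [hx] using hC (s, x) ⟨hs, hx⟩
    · simp [hx, h0 _ x hx]
  · exact (integrable_indicator_iff hK.measurableSet).2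
      (integrableOn_const hK.measure_lt_top.ne)

lemma continuous_grd {f : 𝔼 → ℝ} (hf : ContDiff ℝ 1 f) : Continuous (grd f) := by
  refine (EuclideanSpace.equiv (Fin d) ℝ).symm.continuous.comp (continuous_pi fun i => ?_)
  exact (hf.continuous_fderiv one_ne_zero).clm_apply continuous_const

lemma continuous_defT {w : 𝔼 → 𝔼} (hw : ContDiff ℝ 1 w) (i j : Fin d) :
    Continuous fun x => defT w x i j := by
  have h : ∀ i j, Continuous fun x => jac w x i j := fun i j =>
    (EuclideanSpace.proj i : 𝔼 →L[ℝ] ℝ).continuous.comp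
      ((hw.continuous_fderiv one_ne_zero).clm_apply continuous_const)
  exact continuous_const.mul ((h i j).add (h j i))

lemma continuous_matVec {A : 𝔼 → Matrix (Fin d) (Fin d) ℝ} {v : 𝔼 → 𝔼}
    (hA : ∀ i j, Continuous fun x => A x i j) (hv : Continuous v) :
    Continuous fun x => matVec (A x) (v x) := by
  refine (EuclideanSpace.equiv (Fin d) ℝ).symm.continuous.comp (continuous_pi fun i => ?_)
  change Continuous fun x => ∑ j, A x i j * v x j
  exact continuous_finsetSum _ fun j _ =>
    (hA i j).mul ((EuclideanSpace.proj j : 𝔼 →L[ℝ] ℝ).continuous.comp hv)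

/-- Integrated balance. Integrability of `F` follows from that of the other terms. -/
lemma integral_eq_of_balance {F T R G D : 𝔼 → ℝ} (hT : Integrable T) (hR : Integrable R)
    (hG : Integrable G) (hD : Integrable D) (h : ∀ x, F x + T x + R x = G x + D x)
    (hF0 : ∫ x, F x = 0) (hT0 : ∫ x, T x = 0) (hD0 : ∫ x, D x = 0) :
    ∫ x, R x = ∫ x, G x := by
  have hF : F = fun x => G x + D x - (T x + R x) := funext fun x => by linarith [h x]
  have h1 : ∫ x, (G x + D x - (T x + R x)) = (∫ x, (G x + D x)) - ∫ x, (T x + R x) :=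
    integral_sub (hG.add hD) (hT.add hR)
  rw [hF, h1, integral_add hG hD, integral_add hT hR] at hF0
  linarith

end Helpers

/-- If the EMAC variational identity holds at every time when tested against
the fields `v = φ(t,·) c`, and the weak transport identity
`∫ (∂ₜφ + u·∇φ)(u·c) dx = 0` holds for every constant vector `c`, then with `p = p̂ + ½‖u‖²`
the weak (diffuse-volume) Lagrangian local momentum balance holds:
`d/dt ∫ φ u dx = ∫ [−2ν D(u)∇φ + p ∇φ] dx`. -/
theorem emac_weak_lagrangian_momentum (d : ℕ) (hd : 1 ≤ d) (ν : ℝ) (hν : 0 ≤ ν)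
    (u : ℝ → EuclideanSpace ℝ (Fin d) → EuclideanSpace ℝ (Fin d))
    (phat : ℝ → EuclideanSpace ℝ (Fin d) → ℝ)
    (φ : ℝ → EuclideanSpace ℝ (Fin d) → ℝ)
    (hu : ContDiff ℝ 1 (Function.uncurry u))
    (hphat : Continuous (Function.uncurry phat))
    (hφ : ContDiff ℝ 1 (Function.uncurry φ))
    (K : Set (EuclideanSpace ℝ (Fin d))) (hK : IsCompact K)
    (hsupp : ∀ t, tsupport (φ t) ⊆ K)
    (hEMAC : ∀ (t : ℝ) (c : EuclideanSpace ℝ (Fin d)),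
      (∫ x, (dotp (deriv (fun s => u s x) t) (φ t x • c)
        + 2 * dotp (matVec (defT (u t) x) (u t x)) (φ t x • c)
        + dvg (u t) x * dotp (u t x) (φ t x • c)
        + 2 * ν * frob (defT (u t) x) (defT (fun y => φ t y • c) x)
        - phat t x * dvg (fun y => φ t y • c) x)) = 0)
    (htrans : ∀ (t : ℝ) (c : EuclideanSpace ℝ (Fin d)),
      (∫ x, (deriv (fun s => φ s x) t + dotp (u t x) (grd (φ t) x)) * dotp (u t x) c) = 0) :
    ∀ t : ℝ,
      HasDerivAt (fun s => ∫ x, φ s x • u s x)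
        (∫ x, ((-(2 * ν)) • matVec (defT (u t) x) (grd (φ t) x)
          + (phat t x + (1/2) * ‖u t x‖ ^ 2) • grd (φ t) x)) t := by
  intro t
  have hut : ContDiff ℝ 1 (u t) := hu.comp (contDiff_const.prodMk contDiff_id)
  have hφt : ContDiff ℝ 1 (φ t) := hφ.comp (contDiff_const.prodMk contDiff_id)
  have hqt : Continuous (phat t) := hphat.comp (continuous_const.prodMk continuous_id)
  have hφ0 : ∀ s x, x ∉ K → φ s x = 0 := fun s x hx =>
    image_eq_zero_of_notMem_tsupport fun h => hx (hsupp s h)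
  have hφc : HasCompactSupport (φ t) := HasCompactSupport.intro hK (hφ0 t)
  have hgrd0 : ∀ x, x ∉ K → grd (φ t) x = 0 := by
    intro x hx
    ext i
    rw [grd_apply]
    exact image_eq_zero_of_notMem_tsupport
      (f := fun y => fderiv ℝ (φ t) y (EuclideanSpace.single i 1))
      fun h => hx (hsupp t (tsupport_fderiv_apply_subset ℝ _ h))
  have hgc := continuous_grd hφt
  have hcoord : ∀ i, ContDiff ℝ 1 fun x => u t x i := fun i =>
    (EuclideanSpace.proj i : EuclideanSpace ℝ (Fin d) →L[ℝ] ℝ).contDiff.comp hut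
  obtain ⟨hGint, hG⟩ := hasDerivAt_integral_of_compact (f := fun s x => φ s x • u s x)
    (hφ.smul hu) hK (fun s x hx => by simp [hφ0 s x hx]) t
  suffices h : (∫ x, ((-(2 * ν)) • matVec (defT (u t) x) (grd (φ t) x)
      + (phat t x + (1/2) * ‖u t x‖ ^ 2) • grd (φ t) x))
      = ∫ x, deriv (fun s => φ s x • u s x) t by
    rw [h]
    exact hG
  have hRint : Integrable fun x => (-(2 * ν)) • matVec (defT (u t) x) (grd (φ t) x)
      + (phat t x + (1/2) * ‖u t x‖ ^ 2) • grd (φ t) x := by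
    refine Continuous.integrable_of_hasCompactSupport ?_ (HasCompactSupport.intro hK ?_)
    · exact ((continuous_matVec (continuous_defT hut) hgc).const_smul (-(2 * ν))).add
        ((hqt.add (continuous_const.mul (hut.continuous.norm.pow 2))).smul hgc)
    · intro x hx
      ext i
      simp [matVec_apply, hgrd0 x hx]
  have hGval : ∀ x, deriv (fun s => φ s x • u s x) t
      = φ t x • deriv (fun s => u s x) t + deriv (fun s => φ s x) t • u t x := fun x =>
    ((hasDerivAt_slice hφ t x).differentiableAt.hasDerivAt.smul
      (hasDerivAt_slice hu t x).differentiableAt.hasDerivAt).deriv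
  ext k
  have hproj : ∀ {h : EuclideanSpace ℝ (Fin d) → EuclideanSpace ℝ (Fin d)}, Integrable h →
      Integrable (fun x => h x k) ∧ (∫ x, h x) k = ∫ x, h x k := fun hh =>
    ⟨(EuclideanSpace.proj k : EuclideanSpace ℝ (Fin d) →L[ℝ] ℝ).integrable_comp hh,
      ((EuclideanSpace.proj k : EuclideanSpace ℝ (Fin d) →L[ℝ] ℝ).integral_comp_comm hh).symm⟩
  obtain ⟨hGk, hGe⟩ := hproj hGint
  obtain ⟨hRk, hRe⟩ := hproj hRint
  rw [hGe, hRe]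
  have hTint : Integrable fun x => (deriv (fun s => φ s x) t + dotp (u t x) (grd (φ t) x))
      * dotp (u t x) (EuclideanSpace.single k 1) := by
    simp only [dotp_single]
    refine Continuous.integrable_of_hasCompactSupport ?_ (HasCompactSupport.intro hK ?_)
    · refine Continuous.mul (((continuous_deriv_slice hφ).comp
        (continuous_const.prodMk continuous_id)).add ?_) (hcoord k).continuous
      exact continuous_finsetSum _ fun i _ => (hcoord i).continuous.mul
        ((EuclideanSpace.proj i : EuclideanSpace ℝ (Fin d) →L[ℝ] ℝ).continuous.comp hgc)
    · intro x hx
      simp [hφ0 _ x hx, hgrd0 x hx, dotp]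
  have hflux : ∀ j, _ := fun j => integral_fderiv_eq_zero
    (hφt.mul ((hcoord j).mul (hcoord k))) hφc.mul_right (EuclideanSpace.single j 1)
  have hen := integral_fderiv_eq_zero
    (hφt.mul (ContDiff.sum (s := Finset.univ) fun i _ => (hcoord i).mul (hcoord i)))
    hφc.mul_right (EuclideanSpace.single k 1)
  have hdiv : Integrable (fun x => (∑ j, fderiv ℝ (fun y => φ t y * (u t y j * u t y k)) x
      (EuclideanSpace.single j 1)) + 1 / 2 * fderiv ℝ (fun y => φ t y * ∑ i, u t y i * u t y i) x
            (EuclideanSpace.single k 1)) :=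
    (integrable_finsetSum _ fun j _ => (hflux j).1).add (hen.1.const_mul _)
  have hdiv0 : ∫ x, ((∑ j, fderiv ℝ (fun y => φ t y * (u t y j * u t y k)) x
      (EuclideanSpace.single j 1)) + 1 / 2 * fderiv ℝ (fun y => φ t y * ∑ i, u t y i * u t y i) x
            (EuclideanSpace.single k 1)) = 0 := by
    rw [integral_add (integrable_finsetSum _ fun j _ => (hflux j).1) (hen.1.const_mul _),
      integral_finsetSum _ fun j _ => (hflux j).1, integral_const_mul, hen.2,
      Finset.sum_eq_zero fun j _ => (hflux j).2]
    simp
  have key := fun x => pointwise_balance (hφt.differentiable one_ne_zero x)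
    (hut.differentiable one_ne_zero x) (deriv (fun s => u s x) t) (deriv (fun s => φ s x) t)
    (phat t x) ν k
  simp only [← hGval] at key
  have hE := hEMAC t (EuclideanSpace.single k 1)
  have hT := htrans t (EuclideanSpace.single k 1)
  exact integral_eq_of_balance hTint hRk hGk hdiv key hE hT hdiv0

end
end
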